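/- Let X be a vector lattice and let D be a maximal collection of pairwise disjoint nonzero positive vectors in X. Suppose that for each d ∈ D the band B_d generated by d in X has the countable sup property. Then the universal completion X^u is uo-complete, and every uo-Cauchy net in X uo-converges in X^u. -/

import Mathlib

open Filter Set

section Defs

variable {X : Type*} [Lattice X] [AddCommGroup X]
  [CovariantClass X X (· + ·) (· ≤ ·)]

/-- A net `x` *order converges* to `l`: there is a set `A ⊆ X` (playing the role of a net
`a_γ ↓ 0`), downward directed with infimum `0`, such that every `a ∈ A` eventually
dominates `|x α - l|`. -/
def OrderTendsto {Γ : Type*} [Preorder Γ] (x : Γ → X) (l : X) : Prop :=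
  ∃ A : Set X, A.Nonempty ∧ DirectedOn (· ≥ ·) A ∧ IsGLB A 0 ∧
    ∀ a ∈ A, ∃ α₀ : Γ, ∀ α, α₀ ≤ α → |x α - l| ≤ a

/-- A net `x` *uo-converges* to `l` if `|x α - l| ⊓ y` order converges to `0`
for every `y ≥ 0`. -/
def UoTendsto {Γ : Type*} [Preorder Γ] (x : Γ → X) (l : X) : Prop :=
  ∀ y : X, 0 ≤ y → OrderTendsto (fun α => |x α - l| ⊓ y) 0

/-- A net is *order Cauchy* if the doubly indexed net of differences order converges to `0`. -/
def OrderCauchy {Γ : Type*} [Preorder Γ] (x : Γ → X) : Prop :=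
  OrderTendsto (fun p : Γ × Γ => x p.1 - x p.2) 0

/-- A net is *uo-Cauchy* if the doubly indexed net of differences uo-converges to `0`. -/
def UoCauchy {Γ : Type*} [Preorder Γ] (x : Γ → X) : Prop :=
  UoTendsto (fun p : Γ × Γ => x p.1 - x p.2) 0

/-- The Archimedean property for a lattice-ordered group. -/
def VLArchimedean (X : Type*) [Lattice X] [AddCommGroup X] : Prop :=
  ∀ x y : X, 0 ≤ x → (∀ n : ℕ, n • x ≤ y) → x = 0

end Defs

/-- A (Riesz) ideal of a vector lattice: a solid linear subspace. -/
def IsRieszIdeal {X : Type*} [Lattice X] [AddCommGroup X] [Module ℝ X] (I : Set X) : Prop :=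
  (0 : X) ∈ I ∧ (∀ x ∈ I, ∀ y ∈ I, x + y ∈ I) ∧ (∀ (c : ℝ), ∀ x ∈ I, c • x ∈ I) ∧
    ∀ x y : X, |x| ≤ |y| → y ∈ I → x ∈ I

/-- A band: an order closed ideal, i.e. an ideal closed under existing suprema
of its subsets. -/
def IsBand {X : Type*} [Lattice X] [AddCommGroup X] [Module ℝ X] (B : Set X) : Prop :=
  IsRieszIdeal B ∧ ∀ A ⊆ B, ∀ s : X, IsLUB A s → s ∈ B

/-- The band generated by an element `x`: the smallest band containing `x`. -/
def bandGen {X : Type*} [Lattice X] [AddCommGroup X] [Module ℝ X] (x : X) : Set X :=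
  ⋂₀ {B : Set X | IsBand B ∧ x ∈ B}

/-- `s` is the least upper bound of `A` computed within the sub-vector-lattice `S`. -/
def IsLUBWithin {X : Type*} [Preorder X] (S A : Set X) (s : X) : Prop :=
  s ∈ S ∧ s ∈ upperBounds A ∧ ∀ b ∈ S, b ∈ upperBounds A → s ≤ b

/-- The sub-vector-lattice `S` has the countable sup property. -/
def CountableSupWithin {X : Type*} [Preorder X] (S : Set X) : Prop :=
  ∀ A ⊆ S, ∀ s : X, IsLUBWithin S A s → ∃ C ⊆ A, C.Countable ∧ IsLUBWithin S C s

/-!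
Order completeness lets one take the order lower limit of a uo-Cauchy net, provided the net is
order bounded from below and its eventual lower bounds are order bounded from above. Splitting a
net into positive and negative parts settles the first point. For the second, uo-Cauchyness bounds
the eventual lower bounds locally: below every `u > 0` lies an `e > 0` such that the truncations
`z ⊓ n • e` are bounded. A maximal disjoint family of such `e` yields disjoint local suprema, and
lateral completeness provides a common upper bound for them. In an Archimedean lattice group,
an inequality `(x - b) ⊓ u ≤ a` says precisely that `x` is at most `b + a` on the band generated by
`(u - a)⁺`, that is, that `x ⊓ n • (u - a)⁺ ≤ b + a` for all `n`; this is how Cauchy estimates are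
turned into bounds and back.

For a uo-Cauchy net in the order dense sublattice one truncates the oscillations only by elements
of that sublattice, which by the Archimedean property is enough for the net to be uo-Cauchy in the
larger lattice.
-/

section LatticeGroup

variable {G : Type*} [Lattice G] [AddCommGroup G] [AddLeftMono G]

theorem inf_le_of_isLUB {S : Set G} {s u c : G} (hs : IsLUB S s) (h : ∀ x ∈ S, x ⊓ u ≤ c) :
    s ⊓ u ≤ c := by
  have hle : s ≤ c + (s ⊔ u) - u := hs.2 fun x hx => by
    rw [le_sub_iff_add_le, ← inf_add_sup]
    exact add_le_add (h x hx) (sup_le_sup_right (hs.1 hx) u)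
  rw [le_sub_iff_add_le, ← inf_add_sup] at hle
  exact le_of_add_le_add_right hle

theorem inf_le_of_isLUB_of_isLUB {S T : Set G} {s t c : G} (hs : IsLUB S s) (ht : IsLUB T t)
    (h : ∀ x ∈ S, ∀ y ∈ T, x ⊓ y ≤ c) : s ⊓ t ≤ c :=
  inf_le_of_isLUB hs fun x hx => by
    rw [inf_comm]
    exact inf_le_of_isLUB ht fun y hy => by simpa only [inf_comm] using h x hx y hy

theorem abs_inf_le {x u a : G} (h : x ⊓ u ≤ a) (h' : -x ⊓ u ≤ a) : |x| ⊓ u ≤ a := by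
  refine inf_le_of_isLUB (S := {x, -x}) isLUB_pair ?_
  rintro _ (rfl | rfl)
  exacts [h, h']

theorem add_inf_le_inf_add_inf {p q r : G} (hp : 0 ≤ p) (hq : 0 ≤ q) (hr : 0 ≤ r) :
    (p + q) ⊓ r ≤ p ⊓ r + q ⊓ r := by
  rw [add_inf, inf_add, inf_add]
  exact le_inf (le_inf inf_le_left (inf_le_right.trans (le_add_of_nonneg_right hq)))
    (le_inf (inf_le_right.trans (le_add_of_nonneg_left hp))
      (inf_le_right.trans (le_add_of_nonneg_right hr)))

theorem nsmul_inf_eq_zero {p q : G} (hp : 0 ≤ p) (hq : 0 ≤ q) (h : p ⊓ q = 0) (n : ℕ) :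
    (n • p) ⊓ q = 0 := by
  refine le_antisymm ?_ (le_inf (nsmul_nonneg hp n) hq)
  induction n with
  | zero => simp only [zero_nsmul, inf_le_left]
  | succ n ih =>
    rw [succ_nsmul]
    exact (add_inf_le_inf_add_inf (nsmul_nonneg hp n) hp hq).trans (add_nonpos ih h.le)

theorem nsmul_inf_nsmul_eq_zero {p q : G} (hp : 0 ≤ p) (hq : 0 ≤ q) (h : p ⊓ q = 0) (m n : ℕ) :
    (m • p) ⊓ (n • q) = 0 := by
  rw [inf_comm]
  exact nsmul_inf_eq_zero hq (nsmul_nonneg hp m)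
    (by rw [inf_comm, nsmul_inf_eq_zero hp hq h m]) n

theorem inf_le_iff_posPart_sub_inf_posPart_sub_eq_zero {p u a : G} :
    p ⊓ u ≤ a ↔ (p - a)⁺ ⊓ (u - a)⁺ = 0 := by
  have hpos : (p - a)⁺ ⊓ (u - a)⁺ = ((p - a) ⊓ (u - a))⁺ :=
    (@posPart_min G (AddCommGroup.toDistribLattice G) _ _ _).symm
  rw [hpos, ← inf_sub, posPart_eq_zero, sub_nonpos]

theorem add_posPart_sub_le {p q w a : G} (hpq : p ≤ q) (hwq : w ≤ q) (h : p ⊓ w ≤ a) :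
    p + (w - a)⁺ ≤ q := by
  have hsum : p + w ≤ q + a := by
    rw [← inf_add_sup, add_comm q]
    exact add_le_add h (sup_le hpq hwq)
  rw [posPart_def, add_sup, add_zero, ← add_sub_assoc]
  exact sup_le (sub_le_iff_le_add.2 hsum) hpq

-- Both sides say that, in the band generated by `e`, the component of `x` is at most that of `b`.
theorem forall_inf_nsmul_le_iff (hG : VLArchimedean G) {x b e : G} (hb : 0 ≤ b) (he : 0 ≤ e) :
    (∀ n : ℕ, x ⊓ n • e ≤ b) ↔ (x - b)⁺ ⊓ e = 0 := by
  constructor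
  · intro h
    set t := (x - b)⁺ ⊓ e
    have ht0 : 0 ≤ t := le_inf (posPart_nonneg _) he
    refine hG t b ht0 fun n => ?_
    have hdisj : t ⊓ (n • t - b)⁺ = 0 := by
      refine le_antisymm ?_ (le_inf ht0 (posPart_nonneg _))
      calc t ⊓ (n • t - b)⁺ ≤ (x - b)⁺ ⊓ (n • e - b)⁺ :=
            inf_le_inf inf_le_left
              (posPart_mono (sub_le_sub_right (nsmul_le_nsmul_right inf_le_right n) b))
        _ = 0 := inf_le_iff_posPart_sub_inf_posPart_sub_eq_zero.1 (h n)
    have hle : (n • t - b)⁺ ≤ n • t := sup_le (sub_le_self _ hb) (nsmul_nonneg ht0 n)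
    have hzero := nsmul_inf_eq_zero ht0 (posPart_nonneg _) hdisj n
    rwa [inf_eq_right.2 hle, posPart_eq_zero, sub_nonpos] at hzero
  · intro h n
    rw [inf_le_iff_posPart_sub_inf_posPart_sub_eq_zero]
    have hdisj : (n • e) ⊓ (x - b)⁺ = 0 :=
      nsmul_inf_eq_zero he (posPart_nonneg _) (by rwa [inf_comm]) n
    refine le_antisymm ?_ (le_inf (posPart_nonneg _) (posPart_nonneg _))
    rw [← hdisj, inf_comm]
    exact inf_le_inf_right _ (sup_le (sub_le_self _ hb) (nsmul_nonneg he n))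

theorem sub_inf_le_iff_forall_inf_nsmul_le (hG : VLArchimedean G) {x b u a : G}
    (hab : 0 ≤ b + a) :
    (x - b) ⊓ u ≤ a ↔ ∀ n : ℕ, x ⊓ n • (u - a)⁺ ≤ b + a := by
  rw [inf_le_iff_posPart_sub_inf_posPart_sub_eq_zero, sub_sub,
    forall_inf_nsmul_le_iff hG hab (posPart_nonneg _)]

end LatticeGroup

/-- Order (Dedekind) completeness: every nonempty order bounded set has a supremum. -/
def OrderComplete (G : Type*) [Preorder G] : Prop :=
  ∀ S : Set G, S.Nonempty → BddBelow S → BddAbove S → ∃ s, IsLUB S s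

/-- Lateral completeness: every nonempty set of pairwise disjoint positive elements has a
supremum. -/
def LaterallyComplete (G : Type*) [Lattice G] [Zero G] : Prop :=
  ∀ A : Set G, A.Nonempty → (∀ a ∈ A, 0 ≤ a) → A.Pairwise (fun a b => a ⊓ b = 0) →
    ∃ s, IsLUB A s

theorem OrderComplete.vlArchimedean {G : Type*} [Lattice G] [AddCommGroup G] [AddLeftMono G]
    (hG : OrderComplete G) : VLArchimedean G := by
  intro x y hx hxy
  obtain ⟨s, hs⟩ := hG (range fun n : ℕ => n • x) (range_nonempty _)
    ⟨0, forall_mem_range.2 fun n => nsmul_nonneg hx n⟩ ⟨y, forall_mem_range.2 hxy⟩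
  have hle : s ≤ s - x := hs.2 <| forall_mem_range.2 fun n => by
    rw [le_sub_iff_add_le, ← succ_nsmul]
    exact hs.1 (mem_range_self (n + 1))
  exact le_antisymm (by simpa only [le_sub_self_iff] using hle) hx

theorem LaterallyComplete.bddAbove {G : Type*} [Lattice G] [Zero G] (hG : LaterallyComplete G)
    {A : Set G} (hA : ∀ a ∈ A, 0 ≤ a) (hdisj : A.Pairwise fun a b => a ⊓ b = 0) :
    BddAbove A := by
  rcases A.eq_empty_or_nonempty with rfl | hne
  · exact ⟨0, by simp only [upperBounds_empty, mem_univ]⟩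
  · obtain ⟨s, hs⟩ := hG A hne hA hdisj
    exact ⟨s, hs.1⟩

theorem exists_maximal_pairwise_inf_eq_zero {G : Type*} [SemilatticeInf G] [Zero G] {P : G → Prop}
    (hP : ∀ u, 0 < u → ∃ e, 0 < e ∧ e ≤ u ∧ P e) :
    ∃ E : Set G, (∀ e ∈ E, 0 < e ∧ P e) ∧ E.Pairwise (fun a b => a ⊓ b = 0) ∧
      ∀ w, 0 ≤ w → (∀ e ∈ E, w ⊓ e = 0) → w = 0 := by
  obtain ⟨E, ⟨hE, hdisj⟩, hmax⟩ := zorn_subset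
    {E : Set G | (∀ e ∈ E, 0 < e ∧ P e) ∧ E.Pairwise fun a b => a ⊓ b = 0} fun c hc hchain =>
      ⟨⋃₀ c, ⟨fun e ⟨s, hs, he⟩ => (hc hs).1 e he,
        (pairwise_sUnion hchain.directedOn).2 fun s hs => (hc hs).2⟩,
        fun _ => subset_sUnion_of_mem⟩
  refine ⟨E, hE, hdisj, fun w hw hwE => by_contra fun hne => ?_⟩
  obtain ⟨e, he, hew, hPe⟩ := hP w (hw.lt_of_ne' hne)
  have heE : ∀ e' ∈ E, e ⊓ e' = 0 := fun e' he' =>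
    le_antisymm ((inf_le_inf_right e' hew).trans (hwE e' he').le) (le_inf he.le (hE e' he').1.le)
  have hmem : e ∈ E := hmax (y := insert e E)
    ⟨forall_mem_insert.2 ⟨⟨he, hPe⟩, hE⟩,
      hdisj.insert fun e' he' _ => ⟨heE e' he', inf_comm e e' ▸ heE e' he'⟩⟩
    (subset_insert _ _) (mem_insert _ _)
  exact he.ne' (by simpa only [inf_idem] using heE e hmem)

section Truncations

variable {G : Type*} [Lattice G] [AddCommGroup G]

/-- The elements `z ⊓ n • e` with `z ∈ L` and `n : ℕ`. For `L ≥ 0` and `e ≥ 0`, their supremum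
plays the role of the component of the supremum of `L` in the band generated by `e`, before the
latter supremum is known to exist. -/
def truncations (L : Set G) (e : G) : Set G :=
  image2 (fun z (n : ℕ) => z ⊓ n • e) L univ

variable [AddLeftMono G]

theorem nonneg_of_mem_truncations {L : Set G} {e x : G} (hL : ∀ z ∈ L, 0 ≤ z) (he : 0 ≤ e)
    (hx : x ∈ truncations L e) : 0 ≤ x := by
  obtain ⟨z, hz, n, -, rfl⟩ := hx
  exact le_inf (hL z hz) (nsmul_nonneg he n)

theorem inf_nonpos_of_isLUB_truncations {L : Set G} {e e' s s' : G} (he : 0 ≤ e) (he' : 0 ≤ e')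
    (hdisj : e ⊓ e' = 0) (hs : IsLUB (truncations L e) s) (hs' : IsLUB (truncations L e') s') :
    s ⊓ s' ≤ 0 := by
  refine inf_le_of_isLUB_of_isLUB hs hs' ?_
  rintro _ ⟨z, -, n, -, rfl⟩ _ ⟨z', -, m, -, rfl⟩
  exact (inf_le_inf inf_le_right inf_le_right).trans (nsmul_inf_nsmul_eq_zero he he' hdisj n m).le

theorem bddAbove_of_bddAbove_truncations (hdc : OrderComplete G) (hlat : LaterallyComplete G)
    {L : Set G} (hL : ∀ z ∈ L, 0 ≤ z)
    (hloc : ∀ u, 0 < u → ∃ e, 0 < e ∧ e ≤ u ∧ BddAbove (truncations L e)) : BddAbove L := by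
  rcases L.eq_empty_or_nonempty with rfl | hne
  · exact bddAbove_empty
  obtain ⟨E, hE, hdisj, hmax⟩ := exists_maximal_pairwise_inf_eq_zero hloc
  have htrunc_nonneg : ∀ e ∈ E, ∀ x ∈ truncations L e, 0 ≤ x := fun e he _ =>
    nonneg_of_mem_truncations hL (hE e he).1.le
  have htrunc_ne : ∀ e, (truncations L e).Nonempty := fun e => hne.image2 univ_nonempty
  set T : Set G := {s | ∃ e ∈ E, IsLUB (truncations L e) s}
  have hT_nonneg : ∀ s ∈ T, 0 ≤ s := by
    rintro s ⟨e, he, hs⟩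
    obtain ⟨x, hx⟩ := htrunc_ne e
    exact (htrunc_nonneg e he x hx).trans (hs.1 hx)
  have hT_disj : T.Pairwise fun s t => s ⊓ t = 0 := by
    rintro s ⟨e, he, hs⟩ s' ⟨e', he', hs'⟩ hss'
    have hee' : e ≠ e' := by
      rintro rfl
      exact hss' (hs.unique hs')
    exact le_antisymm (inf_nonpos_of_isLUB_truncations (hE e he).1.le (hE e' he').1.le
      (hdisj he he' hee') hs hs') (le_inf (hT_nonneg s ⟨e, he, hs⟩) (hT_nonneg s' ⟨e', he', hs'⟩))
  obtain ⟨b, hb⟩ := hlat.bddAbove hT_nonneg hT_disj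
  refine ⟨b⁺, fun z hz => ?_⟩
  rw [← sub_nonpos, ← posPart_eq_zero]
  refine hmax _ (posPart_nonneg _) fun e he => ?_
  obtain ⟨s, hs⟩ := hdc (truncations L e) (htrunc_ne e) ⟨0, htrunc_nonneg e he⟩ (hE e he).2
  rw [← forall_inf_nsmul_le_iff hdc.vlArchimedean (posPart_nonneg b) (hE e he).1.le]
  exact fun n => (hs.1 ⟨z, hz, n, mem_univ n, rfl⟩).trans ((hb ⟨e, he, hs⟩).trans (le_posPart b))

end Truncations

section UoConvergence

open scoped Pointwise

variable {G : Type*} [Lattice G] [AddCommGroup G] {Γ : Type*} [Preorder Γ]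

/-- The oscillation of the net `y` beyond the index `γ`, truncated at `u`, is at most `a`. -/
def TailOscLE (y : Γ → G) (u a : G) (γ : Γ) : Prop :=
  ∀ ⦃α β : Γ⦄, γ ≤ α → γ ≤ β → |y α - y β| ⊓ u ≤ a

theorem TailOscLE.mono {y : Γ → G} {u a : G} {γ δ : Γ} (h : TailOscLE y u a γ) (hγδ : γ ≤ δ) :
    TailOscLE y u a δ :=
  fun _ _ hα hβ => h (hγδ.trans hα) (hγδ.trans hβ)

theorem TailOscLE.sub_inf_le {y : Γ → G} {u a : G} {γ α β : Γ} (h : TailOscLE y u a γ)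
    (hα : γ ≤ α) (hβ : γ ≤ β) : (y α - y β) ⊓ u ≤ a :=
  (inf_le_inf_right u (le_abs_self _)).trans (h hα hβ)

theorem directedOn_setOf_tailOscLE [IsDirectedOrder Γ] (y : Γ → G) (u : G) :
    DirectedOn (· ≥ ·) {q | ∃ γ, TailOscLE y u q γ} := by
  rintro q ⟨γ, hγ⟩ q' ⟨γ', hγ'⟩
  obtain ⟨δ, hγδ, hγ'δ⟩ := exists_ge_ge γ γ'
  exact ⟨q ⊓ q', ⟨δ, fun _ _ hα hβ => le_inf (hγ.mono hγδ hα hβ) (hγ'.mono hγ'δ hα hβ)⟩,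
    inf_le_left, inf_le_right⟩

/-- The positive elements lying eventually below the net `y`. For `y ≥ 0`, their supremum is the
order lower limit of `y`. -/
def eventualLowerBounds (y : Γ → G) : Set G :=
  {z | 0 ≤ z ∧ ∀ᶠ α in atTop, z ≤ y α}

theorem zero_mem_eventualLowerBounds {y : Γ → G} (hy : ∀ α, 0 ≤ y α) :
    0 ∈ eventualLowerBounds y :=
  ⟨le_rfl, .of_forall hy⟩

variable [AddLeftMono G]

theorem uoTendsto_iff {x : Γ → G} {l : G} :
    UoTendsto x l ↔ ∀ u, 0 ≤ u → ∃ A : Set G, A.Nonempty ∧ DirectedOn (· ≥ ·) A ∧ IsGLB A 0 ∧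
      ∀ a ∈ A, ∃ γ, ∀ α, γ ≤ α → |x α - l| ⊓ u ≤ a := by
  refine forall₂_congr fun u hu => ?_
  have habs : ∀ α, |(|x α - l| ⊓ u) - 0| = |x α - l| ⊓ u := fun α => by
    rw [sub_zero, abs_of_nonneg (le_inf (abs_nonneg _) hu)]
  simp only [OrderTendsto, habs]

theorem uoCauchy_iff [IsDirectedOrder Γ] {y : Γ → G} :
    UoCauchy y ↔ ∀ u, 0 ≤ u → ∃ A : Set G, A.Nonempty ∧ DirectedOn (· ≥ ·) A ∧ IsGLB A 0 ∧
      ∀ a ∈ A, ∃ γ, TailOscLE y u a γ := by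
  have htail : ∀ u a : G,
      (∃ p : Γ × Γ, ∀ q, p ≤ q → |y q.1 - y q.2 - 0| ⊓ u ≤ a) ↔ ∃ γ, TailOscLE y u a γ := by
    intro u a
    simp only [sub_zero]
    constructor
    · rintro ⟨⟨γ₁, γ₂⟩, h⟩
      obtain ⟨γ, hγ₁, hγ₂⟩ := exists_ge_ge γ₁ γ₂
      exact ⟨γ, fun α β hα hβ => h (α, β) ⟨hγ₁.trans hα, hγ₂.trans hβ⟩⟩
    · rintro ⟨γ, h⟩
      exact ⟨(γ, γ), fun _ hq => h hq.1 hq.2⟩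
  simp only [UoCauchy, uoTendsto_iff, htail]

theorem UoCauchy.of_abs_sub_le [IsDirectedOrder Γ] {x y : Γ → G} (hx : UoCauchy x)
    (h : ∀ α β, |y α - y β| ≤ |x α - x β|) : UoCauchy y := by
  rw [uoCauchy_iff] at hx ⊢
  intro u hu
  obtain ⟨A, hne, hdir, hglb, hA⟩ := hx u hu
  refine ⟨A, hne, hdir, hglb, fun a ha => ?_⟩
  obtain ⟨γ, hγ⟩ := hA a ha
  exact ⟨γ, fun α β hα hβ => (inf_le_inf_right u (h α β)).trans (hγ hα hβ)⟩

theorem UoCauchy.posPart [IsDirectedOrder Γ] {y : Γ → G} (hy : UoCauchy y) :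
    UoCauchy fun α => (y α)⁺ :=
  hy.of_abs_sub_le fun _ _ => abs_sup_sub_sup_le_abs _ _ _

theorem UoCauchy.negPart [IsDirectedOrder Γ] {y : Γ → G} (hy : UoCauchy y) :
    UoCauchy fun α => (y α)⁻ :=
  hy.of_abs_sub_le fun α β => (abs_sup_sub_sup_le_abs _ _ _).trans_eq <| by
    rw [neg_sub_neg, abs_sub_comm]

theorem UoTendsto.sub [IsDirectedOrder Γ] {x y : Γ → G} {l m : G} (hx : UoTendsto x l)
    (hy : UoTendsto y m) : UoTendsto (fun α => x α - y α) (l - m) := by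
  rw [uoTendsto_iff] at hx hy ⊢
  intro u hu
  obtain ⟨A, hAne, hAdir, hAglb, hA⟩ := hx u hu
  obtain ⟨B, hBne, hBdir, hBglb, hB⟩ := hy u hu
  refine ⟨A + B, hAne.add hBne, ?_, by simpa only [add_zero] using hAglb.add hBglb, ?_⟩
  · rintro _ ⟨a, ha, b, hb, rfl⟩ _ ⟨a', ha', b', hb', rfl⟩
    obtain ⟨c, hc, hca, hca'⟩ := hAdir a ha a' ha'
    obtain ⟨d, hd, hdb, hdb'⟩ := hBdir b hb b' hb'
    exact ⟨c + d, add_mem_add hc hd, add_le_add hca hdb, add_le_add hca' hdb'⟩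
  · rintro _ ⟨a, ha, b, hb, rfl⟩
    obtain ⟨γ₁, hγ₁⟩ := hA a ha
    obtain ⟨γ₂, hγ₂⟩ := hB b hb
    obtain ⟨γ, hγγ₁, hγγ₂⟩ := exists_ge_ge γ₁ γ₂
    refine ⟨γ, fun α hα => ?_⟩
    have htri : |x α - y α - (l - m)| ≤ |x α - l| + |y α - m| := by
      rw [sub_sub_sub_comm, ← abs_neg (y α - m), sub_eq_add_neg (x α - l)]
      exact abs_add_le _ _
    calc |x α - y α - (l - m)| ⊓ u ≤ (|x α - l| + |y α - m|) ⊓ u := inf_le_inf_right u htri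
      _ ≤ |x α - l| ⊓ u + |y α - m| ⊓ u :=
        add_inf_le_inf_add_inf (abs_nonneg _) (abs_nonneg _) hu
      _ ≤ a + b := add_le_add (hγ₁ α (hγγ₁.trans hα)) (hγ₂ α (hγγ₂.trans hα))

theorem TailOscLE.eventualLowerBound_sub_inf_le [IsDirectedOrder Γ] [Nonempty Γ] {y : Γ → G}
    {u a z : G} {γ α : Γ} (h : TailOscLE y u a γ) (hz : z ∈ eventualLowerBounds y) (hα : γ ≤ α) :
    (z - y α) ⊓ u ≤ a := by
  obtain ⟨β, hzβ, hβ⟩ := (hz.2.and (eventually_ge_atTop γ)).exists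
  exact (inf_le_inf_right u (sub_le_sub_right hzβ _)).trans (h.sub_inf_le hβ hα)

theorem bddAbove_eventualLowerBounds [IsDirectedOrder Γ] [Nonempty Γ] (hdc : OrderComplete G)
    (hlat : LaterallyComplete G) {y : Γ → G} (hy : ∀ α, 0 ≤ y α) (hC : UoCauchy y) :
    BddAbove (eventualLowerBounds y) := by
  refine bddAbove_of_bddAbove_truncations hdc hlat (fun z hz => hz.1) fun u hu => ?_
  obtain ⟨A, -, -, hglb, hA⟩ := uoCauchy_iff.1 hC u hu.le
  obtain ⟨a, ha, hua⟩ : ∃ a ∈ A, ¬u ≤ a := by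
    by_contra! hle
    exact hu.not_ge (hglb.2 hle)
  obtain ⟨γ, hγ⟩ := hA a ha
  have ha0 : 0 ≤ a := hglb.1 ha
  have he : 0 < (u - a)⁺ := (posPart_nonneg _).lt_of_ne' <| by rwa [Ne, posPart_eq_zero, sub_nonpos]
  refine ⟨(u - a)⁺, he, sup_le (sub_le_self u ha0) hu.le, y γ + a, ?_⟩
  rintro _ ⟨z, hz, n, -, rfl⟩
  exact (sub_inf_le_iff_forall_inf_nsmul_le hdc.vlArchimedean (add_nonneg (hy γ) ha0)).1
    (hγ.eventualLowerBound_sub_inf_le hz le_rfl) n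

theorem TailOscLE.abs_sub_inf_le_of_isLUB [IsDirectedOrder Γ] [Nonempty Γ]
    (hG : VLArchimedean G) {y : Γ → G} (hy : ∀ α, 0 ≤ y α) {l u a : G} {γ α : Γ}
    (hl : IsLUB (eventualLowerBounds y) l) (ha : 0 ≤ a) (h : TailOscLE y u a γ) (hα : γ ≤ α) :
    |y α - l| ⊓ u ≤ a := by
  have hl0 : 0 ≤ l := hl.1 (zero_mem_eventualLowerBounds hy)
  have hupper : (y α - l) ⊓ u ≤ a := by
    rw [sub_inf_le_iff_forall_inf_nsmul_le hG (add_nonneg hl0 ha)]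
    intro n
    have hmem : (y α ⊓ n • (u - a)⁺ - a)⁺ ∈ eventualLowerBounds y := by
      refine ⟨posPart_nonneg _, (eventually_ge_atTop γ).mono fun β hβ => ?_⟩
      refine sup_le (sub_le_iff_le_add.2 ?_) (hy β)
      exact (sub_inf_le_iff_forall_inf_nsmul_le hG (add_nonneg (hy β) ha)).1
        (h.sub_inf_le hα hβ) n
    exact sub_le_iff_le_add.1 ((le_posPart _).trans (hl.1 hmem))
  have hlower : (l - y α) ⊓ u ≤ a := by
    refine inf_le_of_isLUB ((OrderIso.subRight (y α)).isLUB_image'.2 hl) ?_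
    rintro _ ⟨z, hz, rfl⟩
    exact h.eventualLowerBound_sub_inf_le hz hα
  exact abs_inf_le hupper (by rwa [neg_sub])

theorem exists_uoTendsto_of_nonneg [IsDirectedOrder Γ] [Nonempty Γ] (hdc : OrderComplete G)
    (hlat : LaterallyComplete G) {y : Γ → G} (hy : ∀ α, 0 ≤ y α) (hC : UoCauchy y) :
    ∃ l, UoTendsto y l := by
  obtain ⟨l, hl⟩ := hdc (eventualLowerBounds y) ⟨0, zero_mem_eventualLowerBounds hy⟩
    ⟨0, fun z hz => hz.1⟩ (bddAbove_eventualLowerBounds hdc hlat hy hC)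
  refine ⟨l, uoTendsto_iff.2 fun u hu => ?_⟩
  obtain ⟨A, hne, hdir, hglb, hA⟩ := uoCauchy_iff.1 hC u hu
  refine ⟨A, hne, hdir, hglb, fun a ha => ?_⟩
  obtain ⟨γ, hγ⟩ := hA a ha
  exact ⟨γ, fun α hα => hγ.abs_sub_inf_le_of_isLUB hdc.vlArchimedean hy hl (hglb.1 ha) hα⟩

theorem UoCauchy.exists_uoTendsto [IsDirectedOrder Γ] [Nonempty Γ] (hdc : OrderComplete G)
    (hlat : LaterallyComplete G) {y : Γ → G} (hC : UoCauchy y) : ∃ l, UoTendsto y l := by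
  obtain ⟨l, hl⟩ := exists_uoTendsto_of_nonneg hdc hlat (fun _ => posPart_nonneg _) hC.posPart
  obtain ⟨m, hm⟩ := exists_uoTendsto_of_nonneg hdc hlat (fun _ => negPart_nonneg _) hC.negPart
  exact ⟨l - m, by simpa only [posPart_sub_negPart] using hl.sub hm⟩

theorem TailOscLE.sub_posPart {y : Γ → G} {u q w a : G} {γ : Γ} (hq : TailOscLE y u q γ)
    (ha : TailOscLE y w a γ) (hwq : w ≤ q) : TailOscLE y u (q - (w - a)⁺) γ :=
  fun _ _ hα hβ => le_sub_iff_add_le.2 <|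
    add_posPart_sub_le (hq hα hβ) hwq ((inf_le_inf_right w inf_le_left).trans (ha hα hβ))

theorem add_mem_lowerBounds_setOf_tailOscLE [IsDirectedOrder Γ] {y : Γ → G} {u v w : G}
    {A : Set G} (hA : IsGLB A 0) (hosc : ∀ a ∈ A, ∃ γ, TailOscLE y w a γ)
    (hw : w ∈ lowerBounds {q | ∃ γ, TailOscLE y u q γ})
    (hv : v ∈ lowerBounds {q | ∃ γ, TailOscLE y u q γ}) :
    v + w ∈ lowerBounds {q | ∃ γ, TailOscLE y u q γ} := by
  rintro q ⟨γ, hγ⟩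
  rw [← sub_nonpos]
  refine hA.2 fun a ha => ?_
  obtain ⟨γ', hγ'⟩ := hosc a ha
  obtain ⟨δ, hγδ, hγ'δ⟩ := exists_ge_ge γ γ'
  have hvq : v ≤ q - (w - a)⁺ := hv ⟨δ, (hγ.mono hγδ).sub_posPart (hγ'.mono hγ'δ) (hw ⟨γ, hγ⟩)⟩
  calc v + w - q ≤ q - (w - a)⁺ + w - q := by gcongr
    _ ≤ q - (w - a) + w - q := by gcongr; exact le_posPart _
    _ = a := by abel

-- If the truncated oscillations had a lower bound `c` with `0 < w ≤ c⁺`, then adding `w` would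
-- preserve their lower bounds, so that all `n • w` would be lower bounds.
theorem uoCauchy_of_forall_exists_tailOscLE [IsDirectedOrder Γ] [Nonempty Γ]
    (hG : VLArchimedean G) {y : Γ → G}
    (h : ∀ u, 0 < u → ∃ w, 0 < w ∧ w ≤ u ∧ ∃ A : Set G, IsGLB A 0 ∧
      ∀ a ∈ A, ∃ γ, TailOscLE y w a γ) : UoCauchy y := by
  refine uoCauchy_iff.2 fun u hu => ?_
  set Q : Set G := {q | ∃ γ, TailOscLE y u q γ}
  have hQ_nonneg : 0 ∈ lowerBounds Q := fun q ⟨γ, hγ⟩ =>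
    (le_inf (abs_nonneg _) hu).trans (hγ (le_refl γ) (le_refl γ))
  have huQ : u ∈ Q := ⟨Classical.arbitrary Γ, fun _ _ _ _ => inf_le_right⟩
  refine ⟨Q, ⟨u, huQ⟩, directedOn_setOf_tailOscLE y u, ⟨hQ_nonneg, fun c hc => ?_⟩, fun _ hq => hq⟩
  by_contra hc0
  obtain ⟨w, hw, hwc, A, hA, hosc⟩ :=
    h c⁺ ((posPart_nonneg c).lt_of_ne' (mt posPart_eq_zero.1 hc0))
  have hwQ : w ∈ lowerBounds Q := fun q hq => hwc.trans (sup_le (hc hq) (hQ_nonneg hq))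
  have hmul : ∀ n : ℕ, n • w ∈ lowerBounds Q := by
    intro n
    induction n with
    | zero => rwa [zero_nsmul]
    | succ n ih =>
      rw [succ_nsmul]
      exact add_mem_lowerBounds_setOf_tailOscLE hA hosc hwQ ih
  exact hw.ne' (hG w u hw.le fun n => hmul n huQ)

end UoConvergence

section OrderDenseSublattice

theorem map_le_map_iff_of_map_sup {X Y F : Type*} [SemilatticeSup X] [SemilatticeSup Y]
    [FunLike F X Y] {ι : F} (hinj : Function.Injective ι)
    (hsup : ∀ a b, ι (a ⊔ b) = ι a ⊔ ι b) {a b : X} : ι a ≤ ι b ↔ a ≤ b := by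
  rw [← sup_eq_right, ← hsup, hinj.eq_iff, sup_eq_right]

variable {X Y F : Type*} [Lattice X] [AddCommGroup X] [Lattice Y] [AddCommGroup Y]
  [FunLike F X Y] [AddMonoidHomClass F X Y]

theorem map_abs_of_map_sup {ι : F} (hsup : ∀ a b, ι (a ⊔ b) = ι a ⊔ ι b) (a : X) :
    ι |a| = |ι a| := by
  rw [abs, abs, hsup, map_neg]

theorem isGLB_image_zero_of_dense {ι : F} (hinj : Function.Injective ι)
    (hsup : ∀ a b, ι (a ⊔ b) = ι a ⊔ ι b)
    (hdense : ∀ z : Y, 0 < z → ∃ x : X, 0 < ι x ∧ ι x ≤ z) {A : Set X} (hA : IsGLB A 0) :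
    IsGLB (ι '' A) 0 := by
  have hnonneg : 0 ∈ lowerBounds (ι '' A) := forall_mem_image.2 fun a ha => by
    rw [← map_zero ι, map_le_map_iff_of_map_sup hinj hsup]
    exact hA.1 ha
  refine ⟨hnonneg, fun c hc => by_contra fun hc0 => ?_⟩
  obtain ⟨x, hx, hxc⟩ := hdense c⁺ ((posPart_nonneg c).lt_of_ne' (mt posPart_eq_zero.1 hc0))
  have hx0 : x ≤ 0 := hA.2 fun a ha => (map_le_map_iff_of_map_sup hinj hsup).1 <|
    hxc.trans (sup_le (hc (mem_image_of_mem ι ha)) (hnonneg (mem_image_of_mem ι ha)))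
  rw [← map_le_map_iff_of_map_sup hinj hsup, map_zero] at hx0
  exact hx.not_ge hx0

variable [AddLeftMono X] [AddLeftMono Y]

theorem map_inf_of_map_sup {ι : F} (hsup : ∀ a b, ι (a ⊔ b) = ι a ⊔ ι b) (a b : X) :
    ι (a ⊓ b) = ι a ⊓ ι b := by
  have hadd : ι (a ⊓ b) + ι (a ⊔ b) = ι a ⊓ ι b + ι (a ⊔ b) := by
    rw [← map_add, inf_add_sup, map_add, hsup, inf_add_sup]
  exact add_right_cancel hadd

theorem TailOscLE.map {Γ : Type*} [Preorder Γ] {ι : F} (hinj : Function.Injective ι)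
    (hsup : ∀ a b, ι (a ⊔ b) = ι a ⊔ ι b) {x : Γ → X} {u a : X} {γ : Γ}
    (h : TailOscLE x u a γ) : TailOscLE (fun α => ι (x α)) (ι u) (ι a) γ := fun α β hα hβ => by
  rw [← map_sub, ← map_abs_of_map_sup hsup, ← map_inf_of_map_sup hsup,
    map_le_map_iff_of_map_sup hinj hsup]
  exact h hα hβ

theorem UoCauchy.map {Γ : Type*} [Preorder Γ] [IsDirectedOrder Γ] [Nonempty Γ]
    (hY : VLArchimedean Y) {ι : F} (hinj : Function.Injective ι)
    (hsup : ∀ a b, ι (a ⊔ b) = ι a ⊔ ι b)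
    (hdense : ∀ z : Y, 0 < z → ∃ x : X, 0 < ι x ∧ ι x ≤ z) {x : Γ → X} (hx : UoCauchy x) :
    UoCauchy fun α => ι (x α) := by
  refine uoCauchy_of_forall_exists_tailOscLE hY fun u hu => ?_
  obtain ⟨w, hw, hwu⟩ := hdense u hu
  have hw0 : 0 ≤ w := by
    rw [← map_le_map_iff_of_map_sup hinj hsup, map_zero]
    exact hw.le
  obtain ⟨A, -, -, hglb, hA⟩ := uoCauchy_iff.1 hx w hw0
  refine ⟨ι w, hw, hwu, ι '' A, isGLB_image_zero_of_dense hinj hsup hdense hglb, ?_⟩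
  rintro _ ⟨a, ha, rfl⟩
  obtain ⟨γ, hγ⟩ := hA a ha
  exact ⟨γ, hγ.map hinj hsup⟩

end OrderDenseSublattice

theorem stmt9_general {X Y F : Type*}
    [Lattice X] [AddCommGroup X] [AddLeftMono X] [Lattice Y] [AddCommGroup Y] [AddLeftMono Y]
    [FunLike F X Y] [AddMonoidHomClass F X Y] (ι : F) (hinj : Function.Injective ι)
    (hsup : ∀ a b, ι (a ⊔ b) = ι a ⊔ ι b)
    (hdense : ∀ z : Y, 0 < z → ∃ x : X, 0 < ι x ∧ ι x ≤ z)
    (hdc : OrderComplete Y) (hlat : LaterallyComplete Y) :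
    (∀ (Γ : Type*) [Preorder Γ] [IsDirectedOrder Γ] [Nonempty Γ] (y : Γ → Y),
        UoCauchy y → ∃ l, UoTendsto y l) ∧
    (∀ (Γ : Type*) [Preorder Γ] [IsDirectedOrder Γ] [Nonempty Γ] (x : Γ → X),
        UoCauchy x → ∃ l : Y, UoTendsto (fun α => ι (x α)) l) :=
  ⟨fun _ _ _ _ _ hy => hy.exists_uoTendsto hdc hlat,
    fun _ _ _ _ _ hx => (hx.map hdc.vlArchimedean hinj hsup hdense).exists_uoTendsto hdc hlat⟩

/-- Let `X` be a vector lattice and `D` a maximal collection of pairwise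
disjoint nonzero positive vectors of `X` such that for each `d ∈ D` the band generated by
`d` has the countable sup property. Then the universal completion `Xᵘ` of `X` (here: any
universally complete vector lattice `Y` containing `X` as an order dense sublattice) is
uo-complete, and every uo-Cauchy net in `X` uo-converges in `Xᵘ`. -/
theorem stmt9 {X Y : Type*}
    [Lattice X] [AddCommGroup X] [CovariantClass X X (· + ·) (· ≤ ·)]
    [Module ℝ X] [PosSMulMono ℝ X]
    [Lattice Y] [AddCommGroup Y] [CovariantClass Y Y (· + ·) (· ≤ ·)]
    [Module ℝ Y] [PosSMulMono ℝ Y]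
    (harchX : VLArchimedean X) (harchY : VLArchimedean Y)
    -- `ι` embeds `X` into `Y` as a sublattice:
    (ι : X →ₗ[ℝ] Y) (hinj : Function.Injective ι)
    (hlatt : ∀ a b : X, ι (a ⊔ b) = ι a ⊔ ι b)
    -- `X` is order dense in `Y`:
    (hdense : ∀ z : Y, 0 < z → ∃ x : X, 0 < ι x ∧ ι x ≤ z)
    -- `Y` is order complete:
    (hYdc : ∀ S : Set Y, S.Nonempty → BddBelow S → BddAbove S → ∃ s, IsLUB S s)
    -- `Y` is laterally complete:
    (hYlat : ∀ A : Set Y, A.Nonempty → (∀ a ∈ A, 0 ≤ a) →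
      A.Pairwise (fun a b => a ⊓ b = 0) → ∃ s, IsLUB A s)
    -- `D` is a maximal collection of pairwise disjoint nonzero positive vectors of `X`:
    (D : Set X) (hDpos : ∀ d ∈ D, 0 < d)
    (hDdisj : D.Pairwise fun a b => a ⊓ b = 0)
    (hDmax : ∀ x : X, 0 < x → (∀ d ∈ D, x ⊓ d = 0) → False)
    -- each band generated by an element of `D` has the countable sup property:
    (hband : ∀ d ∈ D, CountableSupWithin (bandGen d)) :
    -- `Y` is uo-complete:
    (∀ (Γ : Type*) [Preorder Γ] [IsDirected Γ (· ≤ ·)] [Nonempty Γ] (y : Γ → Y),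
        UoCauchy y → ∃ l, UoTendsto y l) ∧
    -- every uo-Cauchy net in `X` uo-converges in `Y`:
    (∀ (Γ : Type*) [Preorder Γ] [IsDirected Γ (· ≤ ·)] [Nonempty Γ] (x : Γ → X),
        UoCauchy x → ∃ l : Y, UoTendsto (fun α => ι (x α)) l) := by
  exact stmt9_general ι hinj hlatt hdense hYdc hYlat
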